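/- Let V be a type, let r₁ and r₂ be binary relations on V (the edge relations of graphs L₁ and L₂, where x r y means y is a successor of x) with r₁ ≤ r₂ (L₁ is a subgraph of L₂), and let S ⊆ V (the node set of the right-hand side R, a subgraph of L₁). Then the set of nodes reachable under r₂ from the set of nodes reachable under r₁ from S equals the set of nodes reachable under r₂ from S: Reach_{r₂}(Reach_{r₁}(S)) = Reach_{r₂}(S). Consequently gr(gr(R, L₁), L₂) = gr(R, L₂), i.e. the R-garbage removal rewriting system is functorial. -/

import Mathlib

/-- The set of nodes reachable from `S` under the edge relation `r`. -/
def Reach {V : Type*} (r : V → V → Prop) (S : Set V) : Set V :=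
  { y | ∃ x ∈ S, Relation.ReflTransGen r x y }

/-- If `r₁ ≤ r₂` (the graph `L₁` is a subgraph of `L₂`) and `S`
is a set of nodes, then the nodes reachable under `r₂` from the nodes reachable
under `r₁` from `S` are exactly the nodes reachable under `r₂` from `S`; hence
`gr(gr(R, L₁), L₂) = gr(R, L₂)`, i.e. the R-garbage removal rewriting system is
functorial. -/
theorem reach_reach_eq_reach {V : Type*} (r₁ r₂ : V → V → Prop) (h : r₁ ≤ r₂)
    (S : Set V) :
    Reach r₂ (Reach r₁ S) = Reach r₂ S := by
  ext y
  constructor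
  · rintro ⟨x, ⟨z, hz, hzx⟩, hxy⟩
    exact ⟨z, hz, (Relation.ReflTransGen.mono h _ _ hzx).trans hxy⟩
  · rintro ⟨x, hx, hxy⟩
    exact ⟨x, ⟨x, hx, Relation.ReflTransGen.refl⟩, hxy⟩
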